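/- For every integer n ≥ 5, the symmetric group S_n satisfies m(S_n) ≤ 52 · ω(n!/2)², where n!/2 = |A_n| is the order of the alternating group A_n. -/

import Mathlib

/-!
Adding the elements of a minimal generating set one at a time gives a strictly increasing chain
of subgroups, and the order at least doubles at each step by Lagrange. Hence
`2 ^ |S| ≤ n! ≤ n ^ n`, that is, `|S| ≤ n log n / log 2`. On the other hand the prime divisors of
`n! / 2` are exactly the primes up to `n`, of which there are at least a constant times `n / log n`
by Chebyshev's lower bound `Chebyshev.pi_ge`. As `(log n) ^ 3` is small compared with `n`, the
square `(n / log n) ^ 2` dominates `n log n`, and the constant `52` is large enough to make this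
work for every `n ≥ 5`.
-/

/-- A finset `S` is a *minimal generating set* of the group `G` if it generates `G`
and no proper subset of it generates `G`. -/
def IsMinimalGeneratingSet {G : Type*} [Group G] (S : Finset G) : Prop :=
  Subgroup.closure (S : Set G) = ⊤ ∧ ∀ T ⊂ S, Subgroup.closure (T : Set G) ≠ ⊤

/-- No element of a minimal generating set lies in the subgroup generated by other elements
of it. -/
lemma IsMinimalGeneratingSet.notMem_closure {G : Type*} [Group G] {S T : Finset G}
    (hS : IsMinimalGeneratingSet S) (hT : T ⊆ S) {x : G} (hxS : x ∈ S) (hxT : x ∉ T) :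
    x ∉ Subgroup.closure (T : Set G) := by
  classical
  intro hx
  have hTe : T ⊆ S.erase x := fun y hy =>
    Finset.mem_erase.2 ⟨fun h => hxT (h ▸ hy), hT hy⟩
  apply hS.2 (S.erase x) (Finset.erase_ssubset hxS)
  rw [eq_top_iff, ← hS.1, Subgroup.closure_le]
  intro y hy
  by_cases hyx : y = x
  · rw [hyx]
    exact Subgroup.closure_mono (Finset.coe_subset.2 hTe) hx
  · exact Subgroup.subset_closure (Finset.mem_coe.2 (Finset.mem_erase.2 ⟨hyx, hy⟩))

/-- Proper inclusions of finite subgroups at least double the order, so `k` elements of a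
minimal generating set generate a subgroup of order at least `2 ^ k`. -/
lemma IsMinimalGeneratingSet.two_pow_card_le {G : Type*} [Group G] [Finite G] {S : Finset G}
    (hS : IsMinimalGeneratingSet S) (T : Finset G) (hT : T ⊆ S) :
    2 ^ T.card ≤ Nat.card (Subgroup.closure (T : Set G)) := by
  classical
  induction T using Finset.induction_on with
  | empty => simp
  | insert x T hxT ih =>
    have hTS : T ⊆ S := (Finset.subset_insert x T).trans hT
    have hx := hS.notMem_closure hTS (hT (Finset.mem_insert_self x T)) hxT
    have hle : Subgroup.closure (T : Set G) ≤ Subgroup.closure ((insert x T : Finset G) : Set G) :=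
      Subgroup.closure_mono (Finset.coe_subset.2 (Finset.subset_insert x T))
    have hxi : x ∈ Subgroup.closure ((insert x T : Finset G) : Set G) :=
      Subgroup.subset_closure (by simp)
    obtain ⟨c, hc⟩ := Subgroup.card_dvd_of_le hle
    have hne : Nat.card (Subgroup.closure (T : Set G)) ≠
        Nat.card (Subgroup.closure ((insert x T : Finset G) : Set G)) := fun h =>
      hx (Subgroup.eq_of_le_of_card_ge hle h.ge ▸ hxi)
    have hpos : 0 < Nat.card (Subgroup.closure ((insert x T : Finset G) : Set G)) := Nat.card_pos
    have hc2 : 2 ≤ c := by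
      by_contra! h
      interval_cases c <;> omega
    rw [Finset.card_insert_of_notMem hxT, pow_succ, hc]
    exact Nat.mul_le_mul (ih hTS) hc2

/-- Halving `n!` loses no prime divisor, since `4 ∣ n!` for `n ≥ 4`. -/
lemma primeCounting_le_card_primeFactors_factorial_div_two {n : ℕ} (hn : 4 ≤ n) :
    Nat.primeCounting n ≤ (n.factorial / 2).primeFactors.card := by
  rw [← Nat.primesLE_card_eq_primeCounting]
  apply Finset.card_le_card
  intro p hp
  obtain ⟨hpn, hp⟩ := Nat.mem_primesLE.1 hp
  have h4 : 4 ∣ n.factorial := Nat.dvd_factorial (by norm_num) hn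
  have hpos := Nat.factorial_pos n
  have hpd : p ∣ n.factorial := Nat.dvd_factorial hp.pos hpn
  refine Nat.mem_primeFactors.2 ⟨hp, ?_, by omega⟩
  by_cases h2 : p = 2
  · subst h2
    omega
  · have h : p ∣ 2 * (n.factorial / 2) := by
      rwa [Nat.mul_div_cancel' (by omega)]
    exact (hp.dvd_mul.1 h).resolve_left
      fun h => h2 ((Nat.prime_dvd_prime_iff_eq hp Nat.prime_two).1 h)

/-- Chebyshev's lower bound `π n ≥ c n / log n`, with `c = log 2 / 3`. -/
lemma mul_log_two_div_three_le_primeCounting_mul_log {n : ℕ} (hn : 5 ≤ n) :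
    n * Real.log 2 / 3 ≤ Nat.primeCounting n * Real.log n := by
  have h2 : (n + 1) ^ 3 ≤ 4 ^ n := by
    induction n, hn using Nat.le_induction with
    | base => norm_num
    | succ n hn ih =>
      rw [pow_succ 4 n]
      nlinarith [Nat.mul_le_mul hn hn, Nat.mul_le_mul hn (Nat.mul_le_mul hn hn)]
  have hlog : 0 < Real.log n := Real.log_pos (by exact_mod_cast (by omega : 1 < n))
  have h1 := (div_le_iff₀ hlog).1 (Chebyshev.pi_ge n)
  have h3 : 3 * Real.log (n + 1) ≤ n * (2 * Real.log 2) := by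
    have : Real.log (((n : ℝ) + 1) ^ 3) ≤ Real.log ((2 ^ 2) ^ n) := by
      apply Real.log_le_log (by positivity)
      norm_num
      exact_mod_cast h2
    simpa [Real.log_pow] using this
  linarith

/-- The function `t ^ 3 / exp t` has maximum `27 / e ^ 3 < 1.4`. -/
lemma log_pow_three_le {x : ℝ} (hx : 1 ≤ x) : Real.log x ^ 3 ≤ 1.4 * x := by
  have hl := Real.log_nonneg hx
  have h1 : Real.log x / 3 ≤ Real.exp (Real.log x / 3 - 1) := by
    linarith [Real.add_one_le_exp (Real.log x / 3 - 1)]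
  have h2 := pow_le_pow_left₀ (by positivity) h1 3
  rw [← Real.exp_nat_mul] at h2
  have h3 : ((3 : ℕ) : ℝ) * (Real.log x / 3 - 1) = Real.log x - ((3 : ℕ) : ℝ) * 1 := by
    push_cast; ring
  rw [h3, Real.exp_sub, Real.exp_log (by linarith), Real.exp_nat_mul, div_pow] at h2
  have he : (2.7 : ℝ) ^ 3 ≤ Real.exp 1 ^ 3 :=
    pow_le_pow_left₀ (by norm_num) (by linarith [Real.exp_one_gt_d9]) 3
  have h4 : x / Real.exp 1 ^ 3 ≤ x / 2.7 ^ 3 :=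
    div_le_div_of_nonneg_left (by linarith) (by norm_num) he
  have h5 := h2.trans h4
  norm_num at h5 ⊢
  linarith

/-- **Theorem 3.5 for `G = S_n`.** For every `n ≥ 5`, every minimal generating set of the
symmetric group `S_n` has size at most `52 · ω(n!/2)²`, where `n!/2 = |A_n|`. -/
theorem max_minimal_generating_set_symmetricGroup_le
    (n : ℕ) (hn : 5 ≤ n)
    (S : Finset (Equiv.Perm (Fin n))) (hS : IsMinimalGeneratingSet S) :
    S.card ≤ 52 * (n.factorial / 2).primeFactors.card ^ 2 := by
  have h1 := hS.two_pow_card_le S subset_rfl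
  rw [hS.1, Subgroup.card_top, Nat.card_eq_fintype_card, Fintype.card_perm,
    Fintype.card_fin] at h1
  have h2 : 2 ^ S.card ≤ n ^ n := h1.trans (Nat.factorial_le_pow n)
  have hm : S.card * Real.log 2 ≤ n * Real.log n := by
    have : Real.log ((2 : ℝ) ^ S.card) ≤ Real.log ((n : ℝ) ^ n) :=
      Real.log_le_log (by positivity) (by exact_mod_cast h2)
    simpa [Real.log_pow] using this
  refine le_trans ?_ (Nat.mul_le_mul_left 52 (Nat.pow_le_pow_left
    (primeCounting_le_card_primeFactors_factorial_div_two (by omega : 4 ≤ n)) 2))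
  have hn1 : (1 : ℝ) < n := by exact_mod_cast (by omega : 1 < n)
  have hlog : 0 < Real.log n := Real.log_pos hn1
  have hL : (0.69 : ℝ) ≤ Real.log 2 := by linarith [Real.log_two_gt_d9]
  have hC := pow_le_pow_left₀ (by positivity)
    (mul_log_two_div_three_le_primeCounting_mul_log hn) 2
  have hT := log_pow_three_le hn1.le
  have hL3 := pow_le_pow_left₀ (by norm_num) hL 3
  set L := Real.log 2
  set t := Real.log n
  set P : ℝ := (Nat.primeCounting n : ℝ) with hP
  have hL0 : 0 < L := by linarith
  suffices h : (S.card : ℝ) ≤ 52 * P ^ 2 by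
    rw [hP] at h
    exact_mod_cast h
  -- Clear denominators: everything is compared after multiplication by `L * t ^ 2`.
  refine le_of_mul_le_mul_right ?_ (by positivity : 0 < L * t ^ 2)
  calc (S.card : ℝ) * (L * t ^ 2) = (S.card * L) * t ^ 2 := by ring
    _ ≤ (n * t) * t ^ 2 := by gcongr
    _ = n * t ^ 3 := by ring
    _ ≤ n * (1.4 * n) := by gcongr
    _ ≤ n * ((52 / 9 * L ^ 3) * n) := by
      gcongr
      norm_num at hL3 ⊢
      linarith
    _ = 52 * L * (n * L / 3) ^ 2 := by ring
    _ ≤ 52 * L * (P * t) ^ 2 := by gcongr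
    _ = 52 * P ^ 2 * (L * t ^ 2) := by ring
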